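/- arXiv:2005.07659 — 2 statements merged into one kernel-verified Lean document; each statement's English description precedes it below -/
import Mathlib

section
/- Let X and Y be real Banach spaces such that X is reflexive, and let i : X → Y be an injective continuous linear map with dense range. Let T > 0, let u : [0,T) → X be bounded in norm (there is M ≥ 0 with ‖u(t)‖_X ≤ M for all t ∈ [0,T)), let b ∈ Y, and define v : [0,T] → Y by v(t) = i(u(t)) for t ∈ [0,T) and v(T) = b. If v is weakly continuous on [0,T] (continuous as a map from [0,T] into Y equipped with its weak topology), then there exists x₀ ∈ X with i(x₀) = b, and the map ũ : [0,T] → X defined by ũ(t) = u(t) for t ∈ [0,T) and ũ(T) = x₀ is weakly continuous on [0,T] (continuous as a map into X equipped with its weak topology). -/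
/-!
By reflexivity the weak closure `K` of the range of `u` is weakly compact, so the weakly
continuous injection `i` is a homeomorphism from `K` onto `i(K)` for the weak topologies.
The set `i(K)` is weakly compact, hence weakly closed, so it contains `v T` as well as
`v t` for `t < T`; composing `v` with the inverse homeomorphism gives the extension.
-/

open Set

theorem continuousOn_image_of_leftInvOn_of_isCompact {β γ : Type*} [TopologicalSpace β]
    [TopologicalSpace γ] [T2Space γ] {K : Set β} (hK : IsCompact K) {f : β → γ}
    (hf : ContinuousOn f K) {g : γ → β} (hg : LeftInvOn g f K) : ContinuousOn g (f '' K) := by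
  refine continuousOn_iff_isClosed.mpr fun C hC => ⟨f '' (C ∩ K), ?_, ?_⟩
  · exact ((hK.inter_left hC).image_of_continuousOn (hf.mono inter_subset_right)).isClosed
  · rw [hg.image_inter', inter_assoc, inter_self]

theorem exists_continuousOn_lift_of_isCompact {α β γ : Type*} [TopologicalSpace α]
    [TopologicalSpace β] [Nonempty β] [TopologicalSpace γ] [T2Space γ] {K : Set β}
    (hK : IsCompact K) {f : β → γ} (hf : ContinuousOn f K) (hinj : InjOn f K) {A s : Set α}
    (hAs : A ⊆ s) (hsA : s ⊆ closure A) {v : α → γ} (hv : ContinuousOn v s)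
    (hvA : MapsTo v A (f '' K)) : ∃ w : α → β, EqOn (f ∘ w) v s ∧ ContinuousOn w s := by
  have hclosed : IsClosed (f '' K) := (hK.image_of_continuousOn hf).isClosed
  have hvs : MapsTo v s (f '' K) := fun t ht =>
    hclosed.closure_subset (((hv t ht).mono hAs).mem_closure (hsA ht) hvA)
  have hinv : ContinuousOn (Function.invFunOn f K) (f '' K) :=
    continuousOn_image_of_leftInvOn_of_isCompact hK hf hinj.leftInvOn_invFunOn
  exact ⟨Function.invFunOn f K ∘ v, fun t ht => Function.invFunOn_eq (hvs ht), hinv.comp hv hvs⟩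

section Reflexive

variable {𝕜 X : Type*} [RCLike 𝕜] [NormedAddCommGroup X] [NormedSpace 𝕜 X]

theorem isCompact_closure_toWeakSpace_image_of_reflexive
    (hrefl : Function.Surjective (NormedSpace.inclusionInDoubleDual 𝕜 X)) {S : Set X}
    (hS : Bornology.IsBounded S) : IsCompact (closure (toWeakSpace 𝕜 X '' S)) := by
  refine NormedSpace.isCompact_closure_of_isBounded 𝕜 X _ ?_ fun φ _ => ?_
  · rwa [preimage_image_eq _ (toWeakSpace 𝕜 X).injective]
  · obtain ⟨x, hx⟩ := hrefl (WeakDual.toStrongDual φ)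
    exact ⟨toWeakSpace 𝕜 X x, congrArg StrongDual.toWeakDual hx⟩

theorem weak_continuity_extension_general {Y α : Type*} [AddCommGroup Y] [Module 𝕜 Y]
    [TopologicalSpace Y] [SeparatingDual 𝕜 Y] [TopologicalSpace α]
    (hrefl : Function.Surjective (NormedSpace.inclusionInDoubleDual 𝕜 X))
    (i : X →L[𝕜] Y) (hi_inj : Function.Injective i) {A s : Set α} (hAs : A ⊆ s)
    (hsA : s ⊆ closure A) {u : α → X} (hu : Bornology.IsBounded (u '' A)) {v : α → Y}
    (hvu : ∀ t ∈ A, v t = i (u t)) (hv_weak : ContinuousOn (fun t => toWeakSpace 𝕜 Y (v t)) s) :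
    ∃ w : α → X, EqOn w u A ∧ (∀ t ∈ s, i (w t) = v t) ∧
      ContinuousOn (fun t => toWeakSpace 𝕜 X (w t)) s := by
  have hvA : MapsTo (fun t => toWeakSpace 𝕜 Y (v t)) A
      (WeakSpace.map i '' closure (toWeakSpace 𝕜 X '' (u '' A))) := fun t ht =>
    ⟨toWeakSpace 𝕜 X (u t), subset_closure (mem_image_of_mem _ (mem_image_of_mem u ht)),
      congrArg (toWeakSpace 𝕜 Y) (hvu t ht).symm⟩
  obtain ⟨w, hwv, hw⟩ := exists_continuousOn_lift_of_isCompact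
    (isCompact_closure_toWeakSpace_image_of_reflexive hrefl hu)
    (WeakSpace.map i).continuous.continuousOn hi_inj.injOn hAs hsA hv_weak hvA
  exact ⟨fun t => (toWeakSpace 𝕜 X).symm (w t),
    fun t ht => hi_inj ((hwv (hAs ht)).trans (hvu t ht)), hwv, hw⟩

end Reflexive

/-- **Weak continuity of Banach-space-valued functions (Strauss-type theorem).**
Let `X`, `Y` be real Banach spaces with `X` reflexive, and `i : X → Y` an injective
continuous linear map with dense range.  Let `T > 0`, let `u : [0,T) → X` be norm-bounded,
let `b ∈ Y`, and let `v : [0,T] → Y` equal `i ∘ u` on `[0,T)` and `b` at `T`.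
If `v` is weakly continuous on `[0,T]`, then `b = i x₀` for some `x₀ ∈ X` and the map
equal to `u` on `[0,T)` and to `x₀` at `T` is weakly continuous on `[0,T]`. -/
theorem weak_continuity_extension
    (X Y : Type*) [NormedAddCommGroup X] [NormedSpace ℝ X] [CompleteSpace X]
    [NormedAddCommGroup Y] [NormedSpace ℝ Y] [CompleteSpace Y]
    (hrefl : Function.Surjective (NormedSpace.inclusionInDoubleDual ℝ X))
    (i : X →L[ℝ] Y) (hi_inj : Function.Injective i) (hi_dense : DenseRange i)
    (T : ℝ) (hT : 0 < T)
    (u : ℝ → X) (M : ℝ) (hM : 0 ≤ M) (hu : ∀ t ∈ Set.Ico (0:ℝ) T, ‖u t‖ ≤ M)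
    (b : Y) (v : ℝ → Y)
    (hv₁ : ∀ t ∈ Set.Ico (0:ℝ) T, v t = i (u t)) (hv₂ : v T = b)
    (hv_weak : ContinuousOn (fun t => toWeakSpace ℝ Y (v t)) (Set.Icc (0:ℝ) T)) :
    ∃ x₀ : X, i x₀ = b ∧
      ContinuousOn (fun t => toWeakSpace ℝ X (if t < T then u t else x₀))
        (Set.Icc (0:ℝ) T) := by
  obtain ⟨w, hwu, hwv, hw⟩ := weak_continuity_extension_general hrefl i hi_inj Ico_subset_Icc_self
    (closure_Ico hT.ne).ge (isBounded_iff_forall_norm_le.mpr ⟨M, forall_mem_image.mpr hu⟩)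
    hv₁ hv_weak
  refine ⟨w T, (hwv T (right_mem_Icc.mpr hT.le)).trans hv₂, hw.congr fun t ht => ?_⟩
  split_ifs with htT
  · exact congrArg (toWeakSpace ℝ X) (hwu ⟨ht.1, htT⟩).symm
  · rw [le_antisymm ht.2 (not_lt.mp htT)]
end

section
/- Let u : ℝ² → ℝ² be a continuously differentiable, compactly supported vector field which is divergence-free, i.e., ∂₁u₁(x) + ∂₂u₂(x) = 0 for every x; let n : ℝ² → ℝ³ be twice continuously differentiable with ‖n(x)‖ = 1 for all x ∈ ℝ²; and let φ : ℝ³ → ℝ be continuously differentiable with gradient ∇φ. Then ∫_{ℝ²} ⟨ Dn(x)(u(x)), |∇n(x)|² n(x) − ∇φ(n(x)) + ⟨∇φ(n(x)), n(x)⟩ n(x) ⟩ dx = 0, where |∇n(x)|² = Σ_{i=1}^{2} ‖∂ᵢn(x)‖². (This is the orthogonality relation ⟨u·∇n, |∇n|²n − φ′(n) + (φ′(n)·n)n⟩ = 0 for a divergence-free velocity field and a sphere-valued director, stated on the whole plane with compactly supported u.) -/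
open RealInnerProductSpace MeasureTheory

/-!
Since `‖n‖` is constant, every derivative of `n` is orthogonal to `n`, so the terms parallel to `n`
contribute nothing and the chain rule turns what is left into
`-D(φ ∘ n)(u) = (φ ∘ n) div u - div ((φ ∘ n) u)`. The last term integrates to zero because
`(φ ∘ n) u` is compactly supported, and the one before it vanishes when `div u = 0`.
-/

section Divergence

variable {E : Type*} [NormedAddCommGroup E] [NormedSpace ℝ E]

/-- The divergence of a vector field `u` on a normed space. It is defined as the trace of the
derivative, so that it depends neither on a basis nor on an inner product; it is `0` where `u` is
not differentiable. -/
noncomputable def divergence (u : E → E) (x : E) : ℝ :=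
  LinearMap.trace ℝ E (fderiv ℝ u x)

theorem divergence_eq_sum_fderiv_single {ι : Type*} [Fintype ι] [DecidableEq ι]
    (u : EuclideanSpace ℝ ι → EuclideanSpace ℝ ι) (x : EuclideanSpace ℝ ι) :
    divergence u x = ∑ i, fderiv ℝ u x (EuclideanSpace.single i 1) i := by
  simp [divergence, LinearMap.trace_eq_sum_inner _ (EuclideanSpace.basisFun ι ℝ),
    EuclideanSpace.inner_single_left]

variable [FiniteDimensional ℝ E] {g : E → ℝ} {u : E → E}

theorem divergence_smul {x : E} (hg : DifferentiableAt ℝ g x) (hu : DifferentiableAt ℝ u x) :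
    divergence (g • u) x = g x * divergence u x + fderiv ℝ g x (u x) := by
  simp [divergence, fderiv_smul hg hu, ContinuousLinearMap.coe_smulRight]

theorem continuous_divergence (hu : ContDiff ℝ 1 u) : Continuous (divergence u) :=
  (LinearMap.trace ℝ E ∘ₗ ContinuousLinearMap.coeLM ℝ).continuous_of_finiteDimensional.comp
    (hu.continuous_fderiv one_ne_zero)

variable [MeasurableSpace E] [BorelSpace E] (μ : Measure E) [μ.IsAddHaarMeasure]

theorem integral_fderiv_eq_zero_of_hasCompactSupport {F : Type*} [NormedAddCommGroup F]
    [NormedSpace ℝ F] {f : E → F} (hf : ContDiff ℝ 1 f) (hf_supp : HasCompactSupport f) :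
    ∫ x, fderiv ℝ f x ∂μ = 0 := by
  have hf'_int : Integrable (fderiv ℝ f) μ :=
    (hf.continuous_fderiv one_ne_zero).integrable_of_hasCompactSupport (hf_supp.fderiv ℝ)
  ext v
  rw [ContinuousLinearMap.integral_apply hf'_int]
  -- Integration by parts against the constant function `1`.
  simpa using integral_smul_fderiv_eq_neg_fderiv_smul_of_integrable (μ := μ) (v := v)
    (f := fun _ : E => (1 : ℝ)) (by simp) (by simpa using hf'_int.apply_continuousLinearMap v)
    (by simpa using hf.continuous.integrable_of_hasCompactSupport hf_supp)
    (fun _ _ => differentiableAt_const _) (fun x _ => hf.differentiable one_ne_zero x)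

theorem integral_divergence_eq_zero_of_hasCompactSupport (hu : ContDiff ℝ 1 u)
    (hu_supp : HasCompactSupport u) : ∫ x, divergence u x ∂μ = 0 := by
  let tr : (E →L[ℝ] E) →L[ℝ] ℝ :=
    (LinearMap.trace ℝ E ∘ₗ ContinuousLinearMap.coeLM ℝ).toContinuousLinearMap
  have hu'_int : Integrable (fderiv ℝ u) μ :=
    (hu.continuous_fderiv one_ne_zero).integrable_of_hasCompactSupport (hu_supp.fderiv ℝ)
  calc ∫ x, divergence u x ∂μ
      = tr (∫ x, fderiv ℝ u x ∂μ) := tr.integral_comp_comm hu'_int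
    _ = 0 := by rw [integral_fderiv_eq_zero_of_hasCompactSupport μ hu hu_supp, map_zero]

theorem integral_fderiv_apply_eq_neg_integral_mul_divergence (hg : ContDiff ℝ 1 g)
    (hu : ContDiff ℝ 1 u) (hu_supp : HasCompactSupport u) :
    ∫ x, fderiv ℝ g x (u x) ∂μ = -∫ x, g x * divergence u x ∂μ := by
  have hg_u_int : Integrable (fun x => fderiv ℝ g x (u x)) μ :=
    ((hg.continuous_fderiv one_ne_zero).clm_apply hu.continuous).integrable_of_hasCompactSupport
      (hu_supp.mono fun x hx hux => hx (by simp [hux]))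
  have hdiv_supp : HasCompactSupport (divergence u) :=
    (hu_supp.fderiv ℝ).comp_left (g := fun T : E →L[ℝ] E => LinearMap.trace ℝ E T) (by simp)
  have hg_div_int : Integrable (fun x => g x * divergence u x) μ :=
    (hg.continuous.mul (continuous_divergence hu)).integrable_of_hasCompactSupport
      hdiv_supp.mul_left
  rw [eq_neg_iff_add_eq_zero, add_comm, ← integral_add hg_div_int hg_u_int,
    ← integral_divergence_eq_zero_of_hasCompactSupport μ (hg.smul hu) hu_supp.smul_left]
  exact integral_congr_ae <| .of_forall fun x =>
    (divergence_smul (hg.differentiable one_ne_zero x) (hu.differentiable one_ne_zero x)).symm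

end Divergence

section Director

open scoped Gradient Topology

variable {E F : Type*} [NormedAddCommGroup E] [NormedSpace ℝ E] [NormedAddCommGroup F]
  [InnerProductSpace ℝ F] {n : E → F}

theorem inner_fderiv_apply_self_eq_zero_of_eventually_norm_eq {x : E} {r : ℝ}
    (hn : DifferentiableAt ℝ n x) (hn_norm : ∀ᶠ y in 𝓝 x, ‖n y‖ = r) (v : E) :
    ⟪fderiv ℝ n x v, n x⟫ = 0 := by
  have hconst : (fun y => ⟪n y, n y⟫) =ᶠ[𝓝 x] fun _ => r ^ 2 :=
    hn_norm.mono fun y hy => (real_inner_self_eq_norm_sq (n y)).trans (congrArg (· ^ 2) hy)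
  have hsum : ⟪n x, fderiv ℝ n x v⟫ + ⟪fderiv ℝ n x v, n x⟫ = 0 := by
    rw [← fderiv_inner_apply ℝ hn hn, hconst.fderiv_eq, fderiv_fun_const]
    rfl
  rw [real_inner_comm] at hsum
  exact self_eq_neg.mp (eq_neg_of_add_eq_zero_left hsum)

variable [CompleteSpace F] {φ : F → ℝ}

theorem inner_fderiv_apply_gradient {x : E} (hφ : DifferentiableAt ℝ φ (n x))
    (hn : DifferentiableAt ℝ n x) (v : E) :
    ⟪fderiv ℝ n x v, ∇ φ (n x)⟫ = fderiv ℝ (φ ∘ n) x v := by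
  rw [inner_gradient_right, fderiv_comp x hφ hn]
  rfl

/-- `c` is the Lagrange multiplier of the constraint `‖n‖ = r`; the director equation has
`c = |∇n|² + ⟨∇φ(n), n⟩`. -/
theorem orthogonality_divergence_free_director_general [FiniteDimensional ℝ E]
    [MeasurableSpace E] [BorelSpace E] (μ : Measure E) [μ.IsAddHaarMeasure] {u : E → E}
    (hu : ContDiff ℝ 1 u) (hu_supp : HasCompactSupport u) (hn : ContDiff ℝ 1 n) {r : ℝ}
    (hn_norm : ∀ x, ‖n x‖ = r) (hφ : ContDiff ℝ 1 φ) (c : E → ℝ) :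
    ∫ x, ⟪fderiv ℝ n x (u x), c x • n x - ∇ φ (n x)⟫ ∂μ = ∫ x, φ (n x) * divergence u x ∂μ := by
  have hpointwise (x : E) :
      ⟪fderiv ℝ n x (u x), c x • n x - ∇ φ (n x)⟫ = -fderiv ℝ (φ ∘ n) x (u x) := by
    have hn_x : DifferentiableAt ℝ n x := hn.differentiable one_ne_zero x
    rw [inner_sub_right, inner_smul_right,
      inner_fderiv_apply_self_eq_zero_of_eventually_norm_eq hn_x (.of_forall hn_norm),
      inner_fderiv_apply_gradient (hφ.differentiable one_ne_zero (n x)) hn_x, mul_zero, zero_sub]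
  simp_rw [hpointwise, integral_neg,
    integral_fderiv_apply_eq_neg_integral_mul_divergence μ (hφ.comp hn) hu hu_supp, neg_neg,
    Function.comp_apply]

end Director

/-- Orthogonality relation `⟨u·∇n, |∇n|² n − φ′(n) + (φ′(n)·n) n⟩ = 0` (integrated over the
plane) for a compactly supported `C¹` divergence-free velocity field `u : ℝ² → ℝ²`, a `C²`
unit-sphere-valued director `n : ℝ² → ℝ³`, and a `C¹` potential `φ : ℝ³ → ℝ`. -/
theorem orthogonality_divergence_free_director
    (u : EuclideanSpace ℝ (Fin 2) → EuclideanSpace ℝ (Fin 2))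
    (hu : ContDiff ℝ 1 u) (hu_supp : HasCompactSupport u)
    (hu_div : ∀ x, ∑ i : Fin 2, fderiv ℝ u x (EuclideanSpace.single i 1) i = 0)
    (n : EuclideanSpace ℝ (Fin 2) → EuclideanSpace ℝ (Fin 3))
    (hn : ContDiff ℝ 2 n) (hn_unit : ∀ x, ‖n x‖ = 1)
    (φ : EuclideanSpace ℝ (Fin 3) → ℝ) (hφ : ContDiff ℝ 1 φ) :
    ∫ x : EuclideanSpace ℝ (Fin 2),
        ⟪fderiv ℝ n x (u x),
          (∑ i : Fin 2, ‖fderiv ℝ n x (EuclideanSpace.single i 1)‖ ^ 2) • n x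
            - gradient φ (n x) + ⟪gradient φ (n x), n x⟫ • n x⟫ = 0 := by
  simp_rw [sub_add_eq_add_sub, ← add_smul]
  rw [orthogonality_divergence_free_director_general volume hu hu_supp (hn.of_le one_le_two)
    hn_unit hφ]
  simp [divergence_eq_sum_fderiv_single, -Fin.sum_univ_two, hu_div]
end
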